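/- Let f : ℝ^d → ℝ (Euclidean space) be measurable and bounded, and let σ > 0. Then the smoothed function F_σ(x) = ∫ f(z) dN(x, σ²I)(z) is twice differentiable, and its Hessian at x, viewed as a bilinear form, satisfies for all u, v ∈ ℝ^d: D²F_σ(x)[u, v] = σ^(−4) ∫ ( ⟨u, z − x⟩·⟨v, z − x⟩ − σ²·⟨u, v⟩ ) f(z) dN(x, σ²I)(z); equivalently, the Hessian matrix equals σ^(−4) E_{z ∼ N(x, σ²I)}[ ((z − x)(z − x)ᵀ − σ²I) f(z) ]. -/

import Mathlib

/-!
`F_σ` is the convolution of `f` with the Gaussian density `g`, so formally `D²F_σ = f ⋆ D²g`.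
Differentiating under the integral sign near `x` requires an integrable majorant of
`‖f t‖ * ‖Dᵏg (x - t)‖`, uniform in `x` on a ball. It exists because `g`, `Dg` and `D²g` are
polynomials times `exp (-‖w‖² / (2σ²))`: lowering the rate `1 / (2σ²)` by an arbitrarily small
amount absorbs first the polynomial factor and then the displacement by `x`.
-/

open MeasureTheory Metric RealInnerProductSpace

/-- The density of the isotropic Gaussian `N(0, σ²I)` on `ℝ^d`, evaluated at `u`. -/
noncomputable def gaussDensity {d : ℕ} (σ : ℝ) (u : EuclideanSpace ℝ (Fin d)) : ℝ :=
  (2 * Real.pi * σ ^ 2) ^ (-(d : ℝ) / 2) * Real.exp (-‖u‖ ^ 2 / (2 * σ ^ 2))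

open Asymptotics ContinuousLinearMap
open scoped Convolution

section Convolution

variable {E F G H : Type*} [NormedAddCommGroup E] [NormedSpace ℝ E] [MeasurableSpace E]
  [NormedAddCommGroup F] [NormedSpace ℝ F] [NormedAddCommGroup G] [NormedSpace ℝ G]
  [NormedAddCommGroup H] [NormedSpace ℝ H] {μ : Measure E} {f : E → F} {x₀ : E}

lemma convolution_precompR_apply_of_convolutionExistsAt {g : E → E →L[ℝ] G}
    (L : F →L[ℝ] G →L[ℝ] H) (hfg : ConvolutionExistsAt f g x₀ (L.precompR E) μ) (u : E) :
    (f ⋆[L.precompR E, μ] g) x₀ u = (f ⋆[L, μ] fun w => g w u) x₀ := by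
  rw [convolution_def, ContinuousLinearMap.integral_apply hfg]
  rfl

lemma convolutionExistsAt_apply_of_precompR {g : E → E →L[ℝ] G} (L : F →L[ℝ] G →L[ℝ] H)
    (hfg : ConvolutionExistsAt f g x₀ (L.precompR E) μ) (u : E) :
    ConvolutionExistsAt f (fun w => g w u) x₀ L μ :=
  hfg.apply_continuousLinearMap u

variable [OpensMeasurableSpace E] [SecondCountableTopology E] {g : E → G}

omit [NormedSpace ℝ E] in
lemma aestronglyMeasurable_convolution_integrand (L : F →L[ℝ] G →L[ℝ] H)
    (hf : AEStronglyMeasurable f μ) (hg : Continuous g) (x : E) :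
    AEStronglyMeasurable (fun t => L (f t) (g (x - t))) μ :=
  L.aestronglyMeasurable_comp₂ hf (by fun_prop : Continuous fun t => g (x - t)).aestronglyMeasurable

theorem hasFDerivAt_convolution_right_of_dominated (L : F →L[ℝ] G →L[ℝ] H) {s : Set E}
    {bound : E → ℝ} (hs : s ∈ nhds x₀) (hf : AEStronglyMeasurable f μ) (hg : ContDiff ℝ 1 g)
    (hfg : ConvolutionExistsAt f g x₀ L μ)
    (h_bound : ∀ t, ∀ x ∈ s, ‖f t‖ * ‖fderiv ℝ g (x - t)‖ ≤ bound t)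
    (h_bound_int : Integrable bound μ) :
    HasFDerivAt (f ⋆[L, μ] g) ((f ⋆[L.precompR E, μ] fderiv ℝ g) x₀) x₀ := by
  have h_translate (t x : E) :
      HasFDerivAt (fun x => g (x - t)) (fderiv ℝ g (x - t)) x :=
    (hasFDerivAt_comp_sub t).2 (hg.differentiable one_ne_zero _).hasFDerivAt
  refine hasFDerivAt_integral_of_dominated_of_fderiv_le hs
    (.of_forall (aestronglyMeasurable_convolution_integrand L hf hg.continuous)) hfg
    (aestronglyMeasurable_convolution_integrand (L.precompR E) hf
      (hg.continuous_fderiv one_ne_zero) x₀)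
    (.of_forall fun t x hx => ?_) (h_bound_int.const_mul ‖L‖)
    (.of_forall fun t x _ => (L (f t)).hasFDerivAt.comp x (h_translate t x))
  calc ‖L.precompR E (f t) (fderiv ℝ g (x - t))‖
      ≤ ‖L (f t)‖ * ‖fderiv ℝ g (x - t)‖ := opNorm_comp_le (L (f t)) _
    _ ≤ ‖L‖ * ‖f t‖ * ‖fderiv ℝ g (x - t)‖ := by gcongr; exact L.le_opNorm _
    _ ≤ ‖L‖ * bound t := by rw [mul_assoc]; gcongr; exact h_bound t x hx

end Convolution

section GaussianDecay

lemma exists_exp_neg_mul_sq_norm_sub_le {E : Type*} [SeminormedAddCommGroup E] {a b : ℝ}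
    (hba : b < a) (R : ℝ) :
    ∃ K, ∀ x t : E, ‖x‖ ≤ R →
      Real.exp (-a * ‖x - t‖ ^ 2) ≤ K * Real.exp (-b * ‖t‖ ^ 2) := by
  refine ⟨Real.exp ((b ^ 2 / (a - b) + |b|) * R ^ 2), fun x t hx => ?_⟩
  rw [← Real.exp_add, Real.exp_le_exp]
  have hδ : 0 < a - b := sub_pos.2 hba
  obtain ⟨r, hr⟩ : ∃ r, ‖t‖ = ‖x - t‖ + r := ⟨_, (add_sub_cancel _ _).symm⟩
  have hrR : r ^ 2 ≤ R ^ 2 := by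
    have h_abs : |r| ≤ ‖x‖ := by
      have h := abs_norm_sub_norm_le t (t - x)
      rwa [norm_sub_rev t x, hr, add_sub_cancel_left, sub_sub_cancel] at h
    exact sq_le_sq' (by linarith [neg_abs_le r]) (by linarith [le_abs_self r])
  have h_square : b * (‖x - t‖ + r) ^ 2 - a * ‖x - t‖ ^ 2 =
      (b ^ 2 / (a - b) + b) * r ^ 2 - ((a - b) * ‖x - t‖ - b * r) ^ 2 / (a - b) := by
    field_simp
    ring
  have h_coeff : (b ^ 2 / (a - b) + b) * r ^ 2 ≤ (b ^ 2 / (a - b) + |b|) * R ^ 2 := by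
    gcongr
    exact le_abs_self b
  have h_nonneg : 0 ≤ ((a - b) * ‖x - t‖ - b * r) ^ 2 / (a - b) := by positivity
  rw [hr]
  linarith

lemma isBigO_one_add_sq_norm_mul_exp {E : Type*} [SeminormedAddCommGroup E] {a c : ℝ}
    (hac : a < c) :
    (fun w : E => (1 + ‖w‖ ^ 2) * Real.exp (-c * ‖w‖ ^ 2)) =O[⊤]
      fun w => Real.exp (-a * ‖w‖ ^ 2) := by
  have hδ : 0 < c - a := sub_pos.2 hac
  refine isBigO_top.2 ⟨1 + 1 / (c - a), fun w => ?_⟩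
  have h_poly : 1 + ‖w‖ ^ 2 ≤ (1 + 1 / (c - a)) * Real.exp ((c - a) * ‖w‖ ^ 2) :=
    calc 1 + ‖w‖ ^ 2 ≤ (1 + 1 / (c - a)) * ((c - a) * ‖w‖ ^ 2 + 1) := by
          have h_expand : (1 + 1 / (c - a)) * ((c - a) * ‖w‖ ^ 2 + 1) =
              1 + ‖w‖ ^ 2 + ((c - a) * ‖w‖ ^ 2 + 1 / (c - a)) := by
            field_simp
            ring
          rw [h_expand]
          exact le_add_of_nonneg_right (by positivity)
      _ ≤ _ := by
          gcongr
          exact Real.add_one_le_exp _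
  rw [Real.norm_of_nonneg (by positivity), Real.norm_of_nonneg (by positivity)]
  calc (1 + ‖w‖ ^ 2) * Real.exp (-c * ‖w‖ ^ 2)
      ≤ (1 + 1 / (c - a)) * Real.exp ((c - a) * ‖w‖ ^ 2) * Real.exp (-c * ‖w‖ ^ 2) := by gcongr
    _ = (1 + 1 / (c - a)) * Real.exp (-a * ‖w‖ ^ 2) := by
      rw [mul_assoc, ← Real.exp_add]
      ring_nf

variable {E F G H : Type*} [NormedAddCommGroup E] [NormedAddCommGroup F] [NormedSpace ℝ F]
  [NormedAddCommGroup G] {f : E → F} {g : E → G} {a b : ℝ}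

lemma exists_norm_mul_norm_sub_le (f : E → F)
    (hg : g =O[⊤] fun w => Real.exp (-a * ‖w‖ ^ 2)) (hba : b < a) (R : ℝ) :
    ∃ K, ∀ t x, ‖x‖ ≤ R →
      ‖f t‖ * ‖g (x - t)‖ ≤ K * ‖Real.exp (-b * ‖t‖ ^ 2) • f t‖ := by
  obtain ⟨C, hC, hgC⟩ := hg.exists_nonneg
  obtain ⟨K, hK⟩ := exists_exp_neg_mul_sq_norm_sub_le (E := E) hba R
  refine ⟨C * K, fun t x hx => ?_⟩
  have h_decay : ‖g (x - t)‖ ≤ C * Real.exp (-a * ‖x - t‖ ^ 2) := by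
    simpa only [Real.norm_eq_abs, Real.abs_exp] using isBigOWith_top.1 hgC (x - t)
  rw [norm_smul, Real.norm_eq_abs, Real.abs_exp]
  calc ‖f t‖ * ‖g (x - t)‖ ≤ ‖f t‖ * (C * (K * Real.exp (-b * ‖t‖ ^ 2))) := by
        gcongr
        exact h_decay.trans (mul_le_mul_of_nonneg_left (hK x t hx) hC)
    _ = C * K * (Real.exp (-b * ‖t‖ ^ 2) * ‖f t‖) := by ring

variable [MeasurableSpace E] [OpensMeasurableSpace E] {μ : Measure E}

lemma aestronglyMeasurable_of_integrable_exp_smul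
    (hf : Integrable (fun z => Real.exp (-b * ‖z‖ ^ 2) • f z) μ) : AEStronglyMeasurable f μ := by
  have h_cont : Continuous fun z : E => Real.exp (b * ‖z‖ ^ 2) := by fun_prop
  refine (h_cont.aestronglyMeasurable.smul hf.aestronglyMeasurable).congr (.of_forall fun z => ?_)
  simp only [Pi.smul_apply', smul_smul, ← Real.exp_add, neg_mul, add_neg_cancel, Real.exp_zero,
    one_smul]

variable [SecondCountableTopology E] [NormedSpace ℝ G] [NormedAddCommGroup H] [NormedSpace ℝ H]

lemma convolutionExistsAt_of_gaussian_decay (L : F →L[ℝ] G →L[ℝ] H)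
    (hf : Integrable (fun z => Real.exp (-b * ‖z‖ ^ 2) • f z) μ) (hba : b < a)
    (hg_cont : Continuous g) (hg : g =O[⊤] fun w => Real.exp (-a * ‖w‖ ^ 2)) (x : E) :
    ConvolutionExistsAt f g x L μ := by
  obtain ⟨K, hK⟩ := exists_norm_mul_norm_sub_le f hg hba ‖x‖
  refine ((hf.norm.const_mul K).const_mul ‖L‖).mono'
    (aestronglyMeasurable_convolution_integrand L
      (aestronglyMeasurable_of_integrable_exp_smul hf) hg_cont x) (.of_forall fun t => ?_)
  calc ‖L (f t) (g (x - t))‖ ≤ ‖L‖ * ‖f t‖ * ‖g (x - t)‖ := le_opNorm₂ _ _ _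
    _ ≤ ‖L‖ * (K * ‖Real.exp (-b * ‖t‖ ^ 2) • f t‖) := by
      rw [mul_assoc]
      exact mul_le_mul_of_nonneg_left (hK t x le_rfl) (by positivity)

variable [NormedSpace ℝ E]

theorem hasFDerivAt_convolution_right_of_gaussian_decay (L : F →L[ℝ] G →L[ℝ] H)
    (hf : Integrable (fun z => Real.exp (-b * ‖z‖ ^ 2) • f z) μ) (hba : b < a)
    (hg_diff : ContDiff ℝ 1 g) (hg : g =O[⊤] fun w => Real.exp (-a * ‖w‖ ^ 2))
    (hg' : fderiv ℝ g =O[⊤] fun w => Real.exp (-a * ‖w‖ ^ 2)) (x : E) :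
    HasFDerivAt (f ⋆[L, μ] g) ((f ⋆[L.precompR E, μ] fderiv ℝ g) x) x := by
  obtain ⟨K, hK⟩ := exists_norm_mul_norm_sub_le f hg' hba (‖x‖ + 1)
  refine hasFDerivAt_convolution_right_of_dominated L (closedBall_mem_nhds x one_pos)
    (aestronglyMeasurable_of_integrable_exp_smul hf) hg_diff
    (convolutionExistsAt_of_gaussian_decay L hf hba hg_diff.continuous hg x)
    (fun t y hy => hK t y ?_) (hf.norm.const_mul K)
  exact norm_le_norm_add_const_of_dist_le (mem_closedBall.1 hy)

theorem fderiv_convolution_right_of_gaussian_decay (L : F →L[ℝ] G →L[ℝ] H)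
    (hf : Integrable (fun z => Real.exp (-b * ‖z‖ ^ 2) • f z) μ) (hba : b < a)
    (hg_diff : ContDiff ℝ 1 g) (hg : g =O[⊤] fun w => Real.exp (-a * ‖w‖ ^ 2))
    (hg' : fderiv ℝ g =O[⊤] fun w => Real.exp (-a * ‖w‖ ^ 2)) :
    fderiv ℝ (f ⋆[L, μ] g) = f ⋆[L.precompR E, μ] fderiv ℝ g :=
  funext fun x =>
    (hasFDerivAt_convolution_right_of_gaussian_decay L hf hba hg_diff hg hg' x).fderiv

theorem differentiable_fderiv_convolution_right_of_gaussian_decay (L : F →L[ℝ] G →L[ℝ] H)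
    (hf : Integrable (fun z => Real.exp (-b * ‖z‖ ^ 2) • f z) μ) (hba : b < a)
    (hg_diff : ContDiff ℝ 2 g) (hg : g =O[⊤] fun w => Real.exp (-a * ‖w‖ ^ 2))
    (hg' : fderiv ℝ g =O[⊤] fun w => Real.exp (-a * ‖w‖ ^ 2))
    (hg'' : fderiv ℝ (fderiv ℝ g) =O[⊤] fun w => Real.exp (-a * ‖w‖ ^ 2)) :
    Differentiable ℝ (fderiv ℝ (f ⋆[L, μ] g)) := by
  rw [fderiv_convolution_right_of_gaussian_decay L hf hba (hg_diff.of_le one_le_two) hg hg']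
  exact fun x => (hasFDerivAt_convolution_right_of_gaussian_decay (L.precompR E) hf hba
    (hg_diff.fderiv_right one_add_one_eq_two.le) hg' hg'' x).differentiableAt

theorem fderiv_fderiv_convolution_right_apply_of_gaussian_decay (L : F →L[ℝ] G →L[ℝ] H)
    (hf : Integrable (fun z => Real.exp (-b * ‖z‖ ^ 2) • f z) μ) (hba : b < a)
    (hg_diff : ContDiff ℝ 2 g) (hg : g =O[⊤] fun w => Real.exp (-a * ‖w‖ ^ 2))
    (hg' : fderiv ℝ g =O[⊤] fun w => Real.exp (-a * ‖w‖ ^ 2))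
    (hg'' : fderiv ℝ (fderiv ℝ g) =O[⊤] fun w => Real.exp (-a * ‖w‖ ^ 2)) (x u v : E) :
    fderiv ℝ (fderiv ℝ (f ⋆[L, μ] g)) x u v =
      (f ⋆[L, μ] fun w => fderiv ℝ (fderiv ℝ g) w u v) x := by
  have hg'_diff : ContDiff ℝ 1 (fderiv ℝ g) := hg_diff.fderiv_right one_add_one_eq_two.le
  have h_exists := convolutionExistsAt_of_gaussian_decay (G := E →L[ℝ] E →L[ℝ] G)
    (H := E →L[ℝ] E →L[ℝ] H) ((L.precompR E).precompR E) hf hba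
    (hg'_diff.continuous_fderiv one_ne_zero) hg'' x
  rw [fderiv_convolution_right_of_gaussian_decay L hf hba (hg_diff.of_le one_le_two) hg hg',
    fderiv_convolution_right_of_gaussian_decay (L.precompR E) hf hba hg'_diff hg' hg'',
    convolution_precompR_apply_of_convolutionExistsAt _ h_exists,
    convolution_precompR_apply_of_convolutionExistsAt _
      (convolutionExistsAt_apply_of_precompR _ h_exists u)]

end GaussianDecay

section Density

lemma abs_inner_mul_inner_sub_mul_inner_le {V : Type*} [SeminormedAddCommGroup V]
    [InnerProductSpace ℝ V] (u v w : V) (c : ℝ) :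
    |⟪u, w⟫ * ⟪v, w⟫ - c * ⟪u, v⟫| ≤ (‖w‖ ^ 2 + |c|) * (‖u‖ * ‖v‖) :=
  calc |⟪u, w⟫ * ⟪v, w⟫ - c * ⟪u, v⟫| ≤ |⟪u, w⟫| * |⟪v, w⟫| + |c| * |⟪u, v⟫| := by
        rw [← abs_mul, ← abs_mul]
        exact abs_sub _ _
    _ ≤ ‖u‖ * ‖w‖ * (‖v‖ * ‖w‖) + |c| * (‖u‖ * ‖v‖) := by
        gcongr <;> exact abs_real_inner_le_norm _ _
    _ = (‖w‖ ^ 2 + |c|) * (‖u‖ * ‖v‖) := by ring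

variable {d : ℕ} {σ : ℝ}

lemma gaussDensity_nonneg (σ : ℝ) (w : EuclideanSpace ℝ (Fin d)) : 0 ≤ gaussDensity σ w := by
  unfold gaussDensity
  positivity

lemma gaussDensity_sub_comm (σ : ℝ) (w z : EuclideanSpace ℝ (Fin d)) :
    gaussDensity σ (w - z) = gaussDensity σ (z - w) := by
  rw [gaussDensity, gaussDensity, norm_sub_rev]

lemma contDiff_gaussDensity (σ : ℝ) {n : WithTop ℕ∞} :
    ContDiff ℝ n (gaussDensity σ : EuclideanSpace ℝ (Fin d) → ℝ) := by
  unfold gaussDensity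
  exact contDiff_const.mul (((contDiff_norm_sq ℝ).neg.div_const _).exp)

lemma hasFDerivAt_gaussDensity (σ : ℝ) (w : EuclideanSpace ℝ (Fin d)) :
    HasFDerivAt (gaussDensity σ) ((-(σ ^ 2)⁻¹ * gaussDensity σ w) • innerSL ℝ w) w := by
  have h := (((hasStrictFDerivAt_norm_sq w).hasFDerivAt.neg.mul_const (2 * σ ^ 2)⁻¹).exp).const_mul
    ((2 * Real.pi * σ ^ 2) ^ (-(d : ℝ) / 2))
  refine h.congr_fderiv ?_
  ext v
  simp only [Pi.neg_apply, neg_apply, smul_apply, coe_innerSL_apply, nsmul_eq_mul,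
    Nat.cast_ofNat, smul_eq_mul, gaussDensity]
  ring_nf

lemma fderiv_gaussDensity (σ : ℝ) :
    fderiv ℝ (gaussDensity σ : EuclideanSpace ℝ (Fin d) → ℝ) =
      fun w => (-(σ ^ 2)⁻¹ * gaussDensity σ w) • innerSL ℝ w :=
  funext fun w => (hasFDerivAt_gaussDensity σ w).fderiv

lemma fderiv_fderiv_gaussDensity_apply (hσ : σ ≠ 0) (w u v : EuclideanSpace ℝ (Fin d)) :
    fderiv ℝ (fderiv ℝ (gaussDensity σ)) w u v =
      (σ ^ 4)⁻¹ * (gaussDensity σ w * (⟪u, w⟫ * ⟪v, w⟫ - σ ^ 2 * ⟪u, v⟫)) := by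
  have h : HasFDerivAt
      (fun w : EuclideanSpace ℝ (Fin d) => (-(σ ^ 2)⁻¹ * gaussDensity σ w) • innerSL ℝ w) _ w :=
    ((hasFDerivAt_gaussDensity σ w).const_mul (-(σ ^ 2)⁻¹)).smul (innerSL ℝ).hasFDerivAt
  rw [fderiv_gaussDensity, h.fderiv]
  calc -(σ ^ 2)⁻¹ * gaussDensity σ w * ⟪u, v⟫ +
        -(σ ^ 2)⁻¹ * (-(σ ^ 2)⁻¹ * gaussDensity σ w * ⟪w, u⟫) * ⟪w, v⟫
      = (σ ^ 4)⁻¹ * (gaussDensity σ w * (⟪w, u⟫ * ⟪w, v⟫ - σ ^ 2 * ⟪u, v⟫)) := by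
        field_simp
        ring
    _ = _ := by rw [real_inner_comm u w, real_inner_comm v w]

lemma isBigO_exp_of_norm_le_gaussDensity_mul {V : Type*} [NormedAddCommGroup V]
    {g : EuclideanSpace ℝ (Fin d) → V} {a C : ℝ} (ha : a < (2 * σ ^ 2)⁻¹)
    (hg : ∀ w, ‖g w‖ ≤ C * (gaussDensity σ w * (1 + ‖w‖ ^ 2))) :
    g =O[⊤] fun w => Real.exp (-a * ‖w‖ ^ 2) := by
  have h_factor (w : EuclideanSpace ℝ (Fin d)) : gaussDensity σ w * (1 + ‖w‖ ^ 2) =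
      (2 * Real.pi * σ ^ 2) ^ (-(d : ℝ) / 2) *
        ((1 + ‖w‖ ^ 2) * Real.exp (-(2 * σ ^ 2)⁻¹ * ‖w‖ ^ 2)) := by
    rw [gaussDensity]
    ring_nf
  have h_bigO : g =O[⊤] fun w => (2 * Real.pi * σ ^ 2) ^ (-(d : ℝ) / 2) *
      ((1 + ‖w‖ ^ 2) * Real.exp (-(2 * σ ^ 2)⁻¹ * ‖w‖ ^ 2)) := by
    refine .of_bound C (.of_forall fun w => (hg w).trans_eq ?_)
    rw [← h_factor, Real.norm_of_nonneg]
    exact mul_nonneg (gaussDensity_nonneg σ w) (by positivity)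
  exact h_bigO.trans ((isBigO_one_add_sq_norm_mul_exp ha).const_mul_left _)

lemma gaussDensity_isBigO_exp {a : ℝ} (ha : a < (2 * σ ^ 2)⁻¹) :
    (gaussDensity σ : EuclideanSpace ℝ (Fin d) → ℝ) =O[⊤] fun w => Real.exp (-a * ‖w‖ ^ 2) := by
  refine isBigO_exp_of_norm_le_gaussDensity_mul (C := 1) ha fun w => ?_
  rw [Real.norm_of_nonneg (gaussDensity_nonneg σ w), one_mul]
  exact le_mul_of_one_le_right (gaussDensity_nonneg σ w) (by simp)

lemma fderiv_gaussDensity_isBigO_exp {a : ℝ} (ha : a < (2 * σ ^ 2)⁻¹) :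
    fderiv ℝ (gaussDensity σ : EuclideanSpace ℝ (Fin d) → ℝ) =O[⊤]
      fun w => Real.exp (-a * ‖w‖ ^ 2) := by
  refine isBigO_exp_of_norm_le_gaussDensity_mul (C := (σ ^ 2)⁻¹) ha fun w => ?_
  have h_norm : ‖w‖ ≤ 1 + ‖w‖ ^ 2 := by nlinarith [sq_nonneg (‖w‖ - 1)]
  have hg := gaussDensity_nonneg σ w
  rw [fderiv_gaussDensity, norm_smul, innerSL_apply_norm, norm_mul, norm_neg,
    Real.norm_of_nonneg hg, Real.norm_of_nonneg (by positivity), mul_assoc]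
  gcongr

lemma fderiv_fderiv_gaussDensity_isBigO_exp (hσ : σ ≠ 0) {a : ℝ} (ha : a < (2 * σ ^ 2)⁻¹) :
    fderiv ℝ (fderiv ℝ (gaussDensity σ : EuclideanSpace ℝ (Fin d) → ℝ)) =O[⊤]
      fun w => Real.exp (-a * ‖w‖ ^ 2) := by
  refine isBigO_exp_of_norm_le_gaussDensity_mul
    (V := EuclideanSpace ℝ (Fin d) →L[ℝ] EuclideanSpace ℝ (Fin d) →L[ℝ] ℝ)
    (C := (σ ^ 4)⁻¹ * (1 + σ ^ 2)) ha fun w => ?_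
  have h_coeff : ‖w‖ ^ 2 + |σ ^ 2| ≤ (1 + σ ^ 2) * (1 + ‖w‖ ^ 2) := by
    rw [abs_sq]
    nlinarith [mul_nonneg (sq_nonneg σ) (sq_nonneg ‖w‖)]
  have hg := gaussDensity_nonneg σ w
  refine opNorm_le_bound₂ _ (by positivity) fun u v => ?_
  rw [fderiv_fderiv_gaussDensity_apply hσ, norm_mul, norm_mul, Real.norm_of_nonneg hg,
    Real.norm_of_nonneg (by positivity), Real.norm_eq_abs]
  calc (σ ^ 4)⁻¹ * (gaussDensity σ w * |⟪u, w⟫ * ⟪v, w⟫ - σ ^ 2 * ⟪u, v⟫|)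
      ≤ (σ ^ 4)⁻¹ * (gaussDensity σ w * ((1 + σ ^ 2) * (1 + ‖w‖ ^ 2) * (‖u‖ * ‖v‖))) := by
        gcongr
        exact (abs_inner_mul_inner_sub_mul_inner_le u v w (σ ^ 2)).trans (by gcongr)
    _ = (σ ^ 4)⁻¹ * (1 + σ ^ 2) * (gaussDensity σ w * (1 + ‖w‖ ^ 2)) * ‖u‖ * ‖v‖ := by ring

end Density

lemma integrable_exp_neg_mul_sq_norm {V : Type*} [NormedAddCommGroup V] [InnerProductSpace ℝ V]
    [FiniteDimensional ℝ V] [MeasurableSpace V] [BorelSpace V] {b : ℝ} (hb : 0 < b) :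
    Integrable fun z : V => Real.exp (-b * ‖z‖ ^ 2) := by
  refine .of_integral_ne_zero ?_
  rw [GaussianFourier.integral_rexp_neg_mul_sq_norm hb]
  positivity

theorem smoothed_function_hessian_general {d : ℕ} {F : Type*} [NormedAddCommGroup F]
    [NormedSpace ℝ F] [CompleteSpace F] (f : EuclideanSpace ℝ (Fin d) → F) {σ b : ℝ} (hσ : σ ≠ 0)
    (hb : b < (2 * σ ^ 2)⁻¹) (hf : Integrable fun z => Real.exp (-b * ‖z‖ ^ 2) • f z) :
    (Differentiable ℝ (fun y => ∫ z, gaussDensity σ (z - y) • f z) ∧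
      Differentiable ℝ (fderiv ℝ (fun y => ∫ z, gaussDensity σ (z - y) • f z))) ∧
    ∀ x u v : EuclideanSpace ℝ (Fin d),
      fderiv ℝ (fderiv ℝ (fun y => ∫ z, gaussDensity σ (z - y) • f z)) x u v =
        (σ ^ 4)⁻¹ • ∫ z, gaussDensity σ (z - x) •
          ((⟪u, z - x⟫ * ⟪v, z - x⟫ - σ ^ 2 * ⟪u, v⟫) • f z) := by
  obtain ⟨a, hba, ha⟩ := exists_between hb
  let L : F →L[ℝ] ℝ →L[ℝ] F := (lsmul ℝ ℝ).flip
  have h_conv : (fun y => ∫ z, gaussDensity σ (z - y) • f z) = f ⋆[L] gaussDensity σ :=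
    funext fun y => by simp only [L, convolution_def, gaussDensity_sub_comm σ y]; rfl
  rw [h_conv]
  refine ⟨⟨fun y => (hasFDerivAt_convolution_right_of_gaussian_decay L hf hba
      (contDiff_gaussDensity σ) (gaussDensity_isBigO_exp ha)
      (fderiv_gaussDensity_isBigO_exp ha) y).differentiableAt,
    differentiable_fderiv_convolution_right_of_gaussian_decay L hf hba
      (contDiff_gaussDensity σ) (gaussDensity_isBigO_exp ha) (fderiv_gaussDensity_isBigO_exp ha)
      (fderiv_fderiv_gaussDensity_isBigO_exp hσ ha)⟩, fun x u v => ?_⟩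
  rw [fderiv_fderiv_convolution_right_apply_of_gaussian_decay L hf hba
    (contDiff_gaussDensity σ) (gaussDensity_isBigO_exp ha) (fderiv_gaussDensity_isBigO_exp ha)
    (fderiv_fderiv_gaussDensity_isBigO_exp hσ ha), convolution_def, ← integral_smul]
  refine integral_congr_ae (.of_forall fun z => ?_)
  simp only [L, flip_apply, lsmul_apply, fderiv_fderiv_gaussDensity_apply hσ, smul_smul]
  rw [gaussDensity_sub_comm, ← neg_sub z x, inner_neg_right, inner_neg_right, neg_mul_neg]

/-- For `f : ℝ^d → ℝ` measurable and bounded and `σ > 0`, the smoothed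
function `F_σ(x) = ∫ f(z) dN(x, σ²I)(z)` is twice differentiable, and its Hessian at `x`,
as a bilinear form, satisfies
`D²F_σ(x)[u, v] = σ⁻⁴ ∫ (⟨u, z − x⟩⟨v, z − x⟩ − σ²⟨u, v⟩) f(z) dN(x, σ²I)(z)`. -/
theorem smoothed_function_hessian {d : ℕ} (f : EuclideanSpace ℝ (Fin d) → ℝ)
    (σ : ℝ) (hσ : 0 < σ) (hf : Measurable f) (C : ℝ) (hfb : ∀ z, |f z| ≤ C) :
    (Differentiable ℝ (fun y : EuclideanSpace ℝ (Fin d) => ∫ z, gaussDensity σ (z - y) * f z) ∧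
      Differentiable ℝ
        (fderiv ℝ (fun y : EuclideanSpace ℝ (Fin d) => ∫ z, gaussDensity σ (z - y) * f z))) ∧
    ∀ (x u v : EuclideanSpace ℝ (Fin d)),
      fderiv ℝ (fderiv ℝ (fun y => ∫ z, gaussDensity σ (z - y) * f z)) x u v =
        (σ ^ 4)⁻¹ *
          ∫ z, gaussDensity σ (z - x) *
            ((⟪u, z - x⟫ * ⟪v, z - x⟫ - σ ^ 2 * ⟪u, v⟫) * f z) := by
  simpa only [smul_eq_mul] using smoothed_function_hessian_general f hσ.ne' (b := (4 * σ ^ 2)⁻¹)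
    (by gcongr; norm_num) ((integrable_exp_neg_mul_sq_norm (by positivity)).mul_bdd
      hf.aestronglyMeasurable (.of_forall hfb))
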